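/- Let f_1,…,f_N : I → I be strictly increasing maps of I = [0,1] into itself and fix an admissibility relation on pairs of symbols. For every finite admissible sequence of iterations (w_0,x_0),…,(w_n,x_n) (meaning each pair (w_i,w_{i+1}) is admissible and x_{i+1} = f_{w_i}(x_i)) there exists a downwards monotonous finite admissible sequence of iterations (w'_0,x'_0),…,(w'_{n'},x'_{n'}) with the same starting point (w'_0,x'_0) = (w_0,x_0), the same final symbol w'_{n'} = w_n, and final point x'_{n'} ≤ x_n. -/

import Mathlib

open Set

/-!
If a sequence of iterations is not downwards monotonous, some symbol recurs, `w i = w (i + d)` with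
`0 < d`, while `x i ≤ x (i + d)`. Cutting the loop out of the word keeps it admissible, and the
remaining maps are then applied to a starting point that is not larger; since they are monotone, the
final point does not increase. The word gets shorter each time, so this stops.
-/

section IteratedMaps

variable {α X : Type*} {adm : α → α → Prop} {f : α → X → X} {S : Set X} {w : ℕ → α}

/-- Admissibility of the finite word `w 0, …, w n`. Words are encoded as functions on `ℕ`, whose
values beyond the last index `n` are irrelevant. -/
def IsAdmissibleWord (adm : α → α → Prop) (w : ℕ → α) (n : ℕ) : Prop :=
  ∀ i < n, adm (w i) (w (i + 1))

/-- The property, for a sequence `(w 0, x 0), …, (w n, x n)`, of being downwards monotonous: the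
point strictly decreases whenever a symbol recurs. -/
def IsDownwardsMonotonous [LT X] (w : ℕ → α) (x : ℕ → X) (n : ℕ) : Prop :=
  ∀ i j, i < j → j ≤ n → w i = w j → x j < x i

/-- The points visited when the maps `f (w 0), f (w 1), …` are applied successively, starting
from `x₀`. -/
def wordOrbit (f : α → X → X) (w : ℕ → α) (x₀ : X) : ℕ → X
  | 0 => x₀
  | n + 1 => f (w n) (wordOrbit f w x₀ n)

theorem eq_wordOrbit {x : ℕ → X} {n : ℕ} (hx : ∀ i < n, x (i + 1) = f (w i) (x i)) :
    x n = wordOrbit f w (x 0) n := by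
  induction n with
  | zero => rfl
  | succ n ih => rw [hx n n.lt_succ_self, ih fun i hi => hx i (hi.trans n.lt_succ_self), wordOrbit]

theorem wordOrbit_congr {v : ℕ → α} {n : ℕ} (hvw : ∀ i < n, v i = w i) (x₀ : X) :
    wordOrbit f v x₀ n = wordOrbit f w x₀ n := by
  induction n with
  | zero => rfl
  | succ n ih =>
    rw [wordOrbit, wordOrbit, hvw n n.lt_succ_self, ih fun i hi => hvw i (hi.trans n.lt_succ_self)]

theorem wordOrbit_add (f : α → X → X) (w : ℕ → α) (x₀ : X) (m n : ℕ) :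
    wordOrbit f w x₀ (m + n) = wordOrbit f (fun k => w (m + k)) (wordOrbit f w x₀ m) n := by
  induction n with
  | zero => rfl
  | succ n ih => rw [← add_assoc, wordOrbit, wordOrbit, ih]

theorem wordOrbit_mem (hmaps : ∀ a, MapsTo (f a) S S) (w : ℕ → α) {x₀ : X} (hx₀ : x₀ ∈ S) (n : ℕ) :
    wordOrbit f w x₀ n ∈ S := by
  induction n with
  | zero => exact hx₀
  | succ n ih => exact hmaps _ ih

theorem monotoneOn_wordOrbit [Preorder X] (hmono : ∀ a, MonotoneOn (f a) S)
    (hmaps : ∀ a, MapsTo (f a) S S) (w : ℕ → α) (n : ℕ) :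
    MonotoneOn (fun x₀ => wordOrbit f w x₀ n) S := by
  induction n with
  | zero => exact monotoneOn_id
  | succ n ih => exact (hmono _).comp ih fun _ hx => wordOrbit_mem hmaps w hx n

/-- The word obtained from `w` by cutting out the `d` letters `w i, …, w (i + d - 1)`. -/
def exciseWord (w : ℕ → α) (i d k : ℕ) : α :=
  if k < i then w k else w (k + d)

theorem exciseWord_add (w : ℕ → α) (i d k : ℕ) : exciseWord w i d (i + k) = w (i + d + k) := by
  rw [exciseWord, if_neg (by omega), add_right_comm]

theorem exciseWord_of_le {i d k : ℕ} (hloop : w i = w (i + d)) (hk : k ≤ i) :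
    exciseWord w i d k = w k := by
  rcases hk.lt_or_eq with hlt | rfl
  · exact if_pos hlt
  · exact (if_neg (lt_irrefl k)).trans hloop.symm

theorem IsAdmissibleWord.exciseWord {i d m : ℕ} (hadm : IsAdmissibleWord adm w (i + d + m))
    (hloop : w i = w (i + d)) : IsAdmissibleWord adm (exciseWord w i d) (i + m) := by
  intro k hk
  rcases lt_or_ge k i with hki | hik
  · rw [exciseWord_of_le hloop hki.le, exciseWord_of_le hloop hki]
    exact hadm k (by omega)
  · obtain ⟨l, rfl⟩ := Nat.exists_eq_add_of_le hik
    rw [add_assoc, exciseWord_add, exciseWord_add]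
    exact hadm (i + d + l) (by omega)

theorem wordOrbit_exciseWord_le [Preorder X] (hmono : ∀ a, MonotoneOn (f a) S)
    (hmaps : ∀ a, MapsTo (f a) S S) {x₀ : X} (hx₀ : x₀ ∈ S) {i d : ℕ}
    (hle : wordOrbit f w x₀ i ≤ wordOrbit f w x₀ (i + d)) (m : ℕ) :
    wordOrbit f (exciseWord w i d) x₀ (i + m) ≤ wordOrbit f w x₀ (i + d + m) := by
  have hprefix : wordOrbit f (exciseWord w i d) x₀ i = wordOrbit f w x₀ i :=
    wordOrbit_congr (fun _ hk => if_pos hk) x₀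
  simp only [wordOrbit_add f _ x₀ _ m, exciseWord_add, hprefix]
  exact monotoneOn_wordOrbit hmono hmaps _ m (wordOrbit_mem hmaps w hx₀ i)
    (wordOrbit_mem hmaps w hx₀ (i + d)) hle

theorem exists_loop_of_not_isDownwardsMonotonous [LinearOrder X] {x : ℕ → X} {n : ℕ}
    (h : ¬ IsDownwardsMonotonous w x n) :
    ∃ i d m, 0 < d ∧ n = i + d + m ∧ w i = w (i + d) ∧ x i ≤ x (i + d) := by
  simp only [IsDownwardsMonotonous, not_forall, not_lt] at h
  obtain ⟨i, j, hij, hjn, hw, hx⟩ := h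
  obtain ⟨d, rfl⟩ := Nat.exists_eq_add_of_le hij.le
  obtain ⟨m, rfl⟩ := Nat.exists_eq_add_of_le hjn
  exact ⟨i, d, m, by omega, rfl, hw, hx⟩

theorem IsAdmissibleWord.exists_isDownwardsMonotonous [LinearOrder X]
    (hmono : ∀ a, MonotoneOn (f a) S) (hmaps : ∀ a, MapsTo (f a) S S) {x₀ : X} (hx₀ : x₀ ∈ S)
    {n : ℕ} (hadm : IsAdmissibleWord adm w n) :
    ∃ (n' : ℕ) (w' : ℕ → α), w' 0 = w 0 ∧ IsAdmissibleWord adm w' n' ∧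
      IsDownwardsMonotonous w' (wordOrbit f w' x₀) n' ∧
      w' n' = w n ∧ wordOrbit f w' x₀ n' ≤ wordOrbit f w x₀ n := by
  induction n using Nat.strong_induction_on generalizing w with
  | _ n ih =>
    by_cases hdown : IsDownwardsMonotonous w (wordOrbit f w x₀) n
    · exact ⟨n, w, rfl, hadm, hdown, rfl, le_rfl⟩
    obtain ⟨i, d, m, hd, rfl, hloop, hle⟩ := exists_loop_of_not_isDownwardsMonotonous hdown
    obtain ⟨n', w', hstart, hadm', hdown', hend, hle'⟩ :=
      ih (i + m) (by omega) (hadm.exciseWord hloop)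
    exact ⟨n', w', hstart.trans (exciseWord_of_le hloop i.zero_le), hadm', hdown',
      hend.trans (exciseWord_add w i d m),
      hle'.trans (wordOrbit_exciseWord_le hmono hmaps hx₀ hle m)⟩

theorem statement12_general [LinearOrder X] (adm : α → α → Prop)
    (hmono : ∀ a, MonotoneOn (f a) S) (hmaps : ∀ a, MapsTo (f a) S S)
    (n : ℕ) (w : ℕ → α) (x : ℕ → X) (hx0 : x 0 ∈ S)
    (hadm : ∀ i < n, adm (w i) (w (i + 1)))
    (hit : ∀ i < n, x (i + 1) = f (w i) (x i)) :
    ∃ (n' : ℕ) (w' : ℕ → α) (x' : ℕ → X),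
      w' 0 = w 0 ∧ x' 0 = x 0 ∧
      (∀ i < n', adm (w' i) (w' (i + 1))) ∧
      (∀ i < n', x' (i + 1) = f (w' i) (x' i)) ∧
      (∀ i j, i < j → j ≤ n' → w' i = w' j → x' j < x' i) ∧
      w' n' = w n ∧ x' n' ≤ x n := by
  obtain ⟨n', w', hstart, hadm', hdown, hend, hle⟩ :=
    IsAdmissibleWord.exists_isDownwardsMonotonous hmono hmaps hx0 hadm
  exact ⟨n', w', wordOrbit f w' (x 0), hstart, rfl, hadm', fun _ _ => rfl, hdown, hend,
    hle.trans_eq (eq_wordOrbit hit).symm⟩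

end IteratedMaps

/-- from every finite admissible sequence of iterations one can extract a
downwards monotonous admissible sequence with the same starting point, the same final
symbol, and a final point not above the original final point. -/
theorem statement12 {N : ℕ} (adm : Fin N → Fin N → Prop) (f : Fin N → ℝ → ℝ)
    (hmono : ∀ k, StrictMonoOn (f k) (Icc 0 1))
    (hmaps : ∀ k, MapsTo (f k) (Icc 0 1) (Icc 0 1))
    (n : ℕ) (w : ℕ → Fin N) (x : ℕ → ℝ) (hx0 : x 0 ∈ Icc (0:ℝ) 1)
    (hadm : ∀ i < n, adm (w i) (w (i + 1)))
    (hit : ∀ i < n, x (i + 1) = f (w i) (x i)) :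
    ∃ (n' : ℕ) (w' : ℕ → Fin N) (x' : ℕ → ℝ),
      w' 0 = w 0 ∧ x' 0 = x 0 ∧
      (∀ i < n', adm (w' i) (w' (i + 1))) ∧
      (∀ i < n', x' (i + 1) = f (w' i) (x' i)) ∧
      (∀ i j, i < j → j ≤ n' → w' i = w' j → x' j < x' i) ∧
      w' n' = w n ∧ x' n' ≤ x n :=
  statement12_general adm (fun k => (hmono k).monotoneOn) hmaps n w x hx0 hadm hit
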